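/- For a nonempty Pareto frontier V in [0,1]^K, the following are equivalent: (1) up(V) is closed and convex (i.e., V ∈ 𝓕); (2) V is p-convex and up(V) is closed. -/

import Mathlib

/-- The upset of `A` within `[0,1]^K`: points of `[0,1]^K` dominating some point of `A`. -/
def upset (K : ℕ) (A : Set (Fin K → ℝ)) : Set (Fin K → ℝ) :=
  {x | x ∈ Set.Icc (0 : Fin K → ℝ) 1 ∧ ∃ y ∈ A, y ≤ x}

/-- Membership in the space `𝓕`: a nonempty Pareto frontier in `[0,1]^K`
(no element dominates a different element) whose upset is closed and convex. -/
def memF (K : ℕ) (V : Set (Fin K → ℝ)) : Prop :=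
  V.Nonempty ∧ V ⊆ Set.Icc (0 : Fin K → ℝ) 1 ∧
    (∀ u ∈ V, ∀ v ∈ V, u ≤ v → u = v) ∧
    IsClosed (upset K V) ∧ Convex ℝ (upset K V)

/-- The metric `d` on `𝓕`: Hausdorff distance (for the ℓ∞ norm) between upsets. -/
noncomputable def dF (K : ℕ) (U V : Set (Fin K → ℝ)) : ℝ :=
  Metric.hausdorffDist (upset K U) (upset K V)

/-- for a nonempty Pareto frontier `V` in `[0,1]^K`, the upset of `V`
is closed and convex (i.e. `V ∈ 𝓕`) iff `V` is p-convex and its upset is closed. -/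
theorem memF_iff_pConvex {K : ℕ} (V : Set (Fin K → ℝ)) (hne : V.Nonempty)
    (hsub : V ⊆ Set.Icc (0 : Fin K → ℝ) 1)
    (hanti : ∀ u ∈ V, ∀ v ∈ V, u ≤ v → u = v) :
    (IsClosed (upset K V) ∧ Convex ℝ (upset K V)) ↔
      ((∀ u ∈ V, ∀ v ∈ V, ∀ l : ℝ, l ∈ Set.Icc (0:ℝ) 1 →
          ∃ r ∈ V, r ≤ l • u + (1 - l) • v) ∧
        IsClosed (upset K V)) := by
  constructor
  · rintro ⟨hc, hx⟩
    refine ⟨fun u hu v hv l hl => ?_, hc⟩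
    have h := hx (x := u) ⟨hsub hu, u, hu, le_rfl⟩ (y := v) ⟨hsub hv, v, hv, le_rfl⟩
      hl.1 (sub_nonneg.2 hl.2) (by ring)
    exact h.2
  · rintro ⟨hp, hc⟩
    refine ⟨hc, ?_⟩
    rintro x ⟨hx, u, hu, hux⟩ y ⟨hy, v, hv, hvy⟩ a b ha hb hab
    refine ⟨convex_Icc (𝕜 := ℝ) 0 1 hx hy ha hb hab, ?_⟩
    obtain ⟨r, hr, hru⟩ := hp u hu v hv a ⟨ha, by linarith⟩
    have hb' : 1 - a = b := by linarith
    rw [hb'] at hru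
    exact ⟨r, hr, hru.trans (add_le_add (smul_le_smul_of_nonneg_left hux ha)
      (smul_le_smul_of_nonneg_left hvy hb))⟩
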